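/- Stirling-type asymptotic: for fixed reals a > 0, b, c, as n → ∞ through values making an + b√n + c a nonnegative integer, (an + b√n + c)! = √(2π) · (an)^{an + b√n + c + 1/2} · e^{b²/(2a) - an} · (1 + O(n^{-1/2})). -/

import Mathlib

open Filter

/-! Binet's function `J x = log Γ(x) - ((x - 1/2) log x - x + log √(2π))` satisfies
`J x - J (x + 1) = (x + 1/2) log (1 + 1/x) - 1`, which lies between `0` and
`1/(12x) - 1/(12(x + 1))`. Since `J (x + n) → 0`, telescoping gives `0 ≤ J x ≤ 1/(12x)`.

Let `δ = O(√y)` and `w = δ/y`. The expansion `(1 + w) log (1 + w) = w + w²/2 + O(w³)` then yields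
`log Γ(y + δ + 1) = (y + δ + 1/2) log y + δ²/(2y) - y + log √(2π) + O(y^{-1/2})`, where
`y w³ = O(y^{-1/2})` is the critical error term. For `y = at` and `δ = b√t + O(1)`, the quadratic
term `δ²/(2y)` is `b²/(2a) + O(t^{-1/2})`. -/

open Asymptotics Topology

/-- Binet's function, the error in Stirling's approximation of `log Γ` on the positive reals. -/
noncomputable def binetFunction (x : ℝ) : ℝ :=
  Real.log (Real.Gamma x) - ((x - 1 / 2) * Real.log x - x + Real.log (2 * Real.pi) / 2)

theorem log_one_add_div {x y : ℝ} (hx : x ≠ 0) (hxy : x + y ≠ 0) :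
    Real.log (1 + y / x) = Real.log (x + y) - Real.log x := by
  rw [← Real.log_div hxy hx, add_div, div_self hx]

section Binet

variable {x : ℝ}

theorem log_Gamma_add_one (hx : 0 < x) :
    Real.log (Real.Gamma (x + 1)) = Real.log (Real.Gamma x) + Real.log x := by
  rw [Real.Gamma_add_one hx.ne', Real.log_mul hx.ne' (Real.Gamma_pos_of_pos hx).ne', add_comm]

theorem log_Gamma_add_one_eq_add_binetFunction (hx : 0 < x) :
    Real.log (Real.Gamma (x + 1)) =
      (x + 1 / 2) * Real.log x - x + Real.log (2 * Real.pi) / 2 + binetFunction x := by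
  rw [log_Gamma_add_one hx, binetFunction]
  ring

theorem binetFunction_sub_binetFunction_add_one (hx : 0 < x) :
    binetFunction x - binetFunction (x + 1) = (x + 1 / 2) * Real.log (1 + x⁻¹) - 1 := by
  rw [binetFunction, binetFunction, log_Gamma_add_one hx, ← one_div,
    log_one_add_div hx.ne' (by positivity)]
  ring

theorem hasSum_binetFunction_sub_binetFunction_add_one (hx : 0 < x) :
    HasSum (fun k : ℕ => 1 / (2 * ((k + 1 : ℕ) : ℝ) + 1) * ((1 / (2 * x + 1)) ^ 2) ^ (k + 1))
      (binetFunction x - binetFunction (x + 1)) := by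
  let f (k : ℕ) : ℝ := 1 / (2 * k + 1) * ((1 / (2 * x + 1)) ^ 2) ^ k
  have hf : HasSum f ((x + 1 / 2) * Real.log (1 + x⁻¹)) := by
    convert! (Real.hasSum_log_one_add_inv hx).mul_left (x + 1 / 2) using 2 with k
    simp only [f]
    rw [← pow_mul, pow_succ]
    field
  rw [binetFunction_sub_binetFunction_add_one hx]
  simpa [f] using (hasSum_nat_add_iff' 1).2 hf

theorem binetFunction_add_one_le (hx : 0 < x) : binetFunction (x + 1) ≤ binetFunction x :=
  sub_nonneg.1 <| (hasSum_binetFunction_sub_binetFunction_add_one hx).nonneg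
    fun k => by positivity

theorem binetFunction_sub_binetFunction_add_one_le (hx : 0 < x) :
    binetFunction x - binetFunction (x + 1) ≤ 1 / (12 * x) - 1 / (12 * (x + 1)) := by
  set q : ℝ := (1 / (2 * x + 1)) ^ 2 with hq
  have hq_lt : q < 1 := by
    rw [hq, sq_lt_one_iff₀ (by positivity), div_lt_one (by positivity)]
    linarith
  have hgeom : HasSum (fun k : ℕ => 1 / 3 * q ^ (k + 1)) (1 / (12 * x) - 1 / (12 * (x + 1))) := by
    convert! (hasSum_geometric_of_lt_one (by positivity) hq_lt).mul_left (1 / 3 * q) using 1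
    · ext k
      ring
    · have : 1 - q = 4 * x * (x + 1) * q := by
        rw [hq]
        field
      rw [this, hq]
      field
  refine hasSum_le (fun k => ?_) (hasSum_binetFunction_sub_binetFunction_add_one hx) hgeom
  gcongr
  push_cast
  linarith [(Nat.cast_nonneg k : (0 : ℝ) ≤ k)]

theorem tendsto_binetFunction_natCast :
    Tendsto (fun n : ℕ => binetFunction n) atTop (𝓝 0) := by
  have hlim : Tendsto (fun n => Real.log (Stirling.stirlingSeq n) - Real.log √Real.pi)
      atTop (𝓝 0) := by
    rw [← sub_self (Real.log √Real.pi)]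
    exact (Stirling.tendsto_stirlingSeq_sqrt_pi.log (by positivity)).sub_const _
  refine hlim.congr' ?_
  filter_upwards [eventually_gt_atTop 0] with n hn
  have hn_pos : (0 : ℝ) < n := Nat.cast_pos.2 hn
  have hGamma := log_Gamma_add_one_eq_add_binetFunction hn_pos
  rw [Real.Gamma_nat_eq_factorial, Real.log_mul two_ne_zero Real.pi_ne_zero] at hGamma
  rw [Stirling.log_stirlingSeq_formula, Real.log_sqrt Real.pi_nonneg,
    Real.log_mul two_ne_zero hn_pos.ne', Real.log_div hn_pos.ne' (Real.exp_ne_zero 1),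
    Real.log_exp, hGamma]
  ring

theorem binetFunction_add_natCast (hx : 0 < x) {n : ℕ} (hn : n ≠ 0) :
    binetFunction (x + n) =
      Real.log (Real.Gamma x) - Real.BohrMollerup.logGammaSeq x n + binetFunction n + x -
        (n * Real.log (1 + x / n) + (x + 1 / 2) * Real.log (1 + x / n)) := by
  have hn_pos : (0 : ℝ) < n := by positivity
  have hshift := Real.BohrMollerup.f_add_nat_eq (f := Real.log ∘ Real.Gamma) log_Gamma_add_one hx n
  have hfact := log_Gamma_add_one_eq_add_binetFunction hn_pos
  simp only [Function.comp_apply] at hshift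
  rw [Real.Gamma_nat_eq_factorial] at hfact
  rw [binetFunction, hshift, Real.BohrMollerup.logGammaSeq, Finset.sum_range_succ, hfact,
    log_one_add_div hn_pos.ne' (by positivity), add_comm (n : ℝ) x]
  ring

theorem tendsto_binetFunction_add_natCast (hx : 0 < x) :
    Tendsto (fun n : ℕ => binetFunction (x + n)) atTop (𝓝 0) := by
  have hmul_log : Tendsto (fun n : ℕ => n * Real.log (1 + x / n)) atTop (𝓝 x) :=
    (Real.tendsto_mul_log_one_add_div_atTop x).comp tendsto_natCast_atTop_atTop
  have hlog : Tendsto (fun n : ℕ => Real.log (1 + x / n)) atTop (𝓝 0) := by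
    simpa using ((tendsto_const_div_atTop_nhds_zero_nat x).const_add 1).log (by simp)
  have hlim := (((Real.BohrMollerup.tendsto_log_gamma hx).const_sub
    (Real.log (Real.Gamma x))).add tendsto_binetFunction_natCast |>.add_const x).sub
      (hmul_log.add (hlog.const_mul (x + 1 / 2)))
  simp only [sub_self, zero_add, mul_zero, add_zero] at hlim
  refine hlim.congr' ?_
  filter_upwards [eventually_ne_atTop 0] with n hn
  exact (binetFunction_add_natCast hx hn).symm

theorem binetFunction_nonneg (hx : 0 < x) : 0 ≤ binetFunction x := by
  have hanti : Antitone fun n : ℕ => binetFunction (x + n) :=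
    antitone_nat_of_succ_le fun n => by
      simpa [add_assoc] using binetFunction_add_one_le (x := x + n) (by positivity)
  simpa using hanti.le_of_tendsto (tendsto_binetFunction_add_natCast hx) 0

theorem binetFunction_le (hx : 0 < x) : binetFunction x ≤ 1 / (12 * x) := by
  have hmono : Monotone fun n : ℕ => binetFunction (x + n) - 1 / (12 * (x + n)) :=
    monotone_nat_of_le_succ fun n => by
      have := binetFunction_sub_binetFunction_add_one_le (x := x + n) (by positivity)
      rw [Nat.cast_succ, ← add_assoc]
      linarith
  have hlim : Tendsto (fun n : ℕ => binetFunction (x + n) - 1 / (12 * (x + n))) atTop (𝓝 0) := by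
    have hden : Tendsto (fun n : ℕ => 12 * (x + n)) atTop atTop :=
      (tendsto_atTop_add_const_left _ x tendsto_natCast_atTop_atTop).const_mul_atTop (by norm_num)
    simpa using (tendsto_binetFunction_add_natCast hx).sub (hden.const_div_atTop 1)
  simpa using hmono.ge_of_tendsto hlim 0

theorem binetFunction_isBigO_inv : binetFunction =O[atTop] fun x => x⁻¹ := by
  refine IsBigO.of_bound (1 / 12) ?_
  filter_upwards [eventually_gt_atTop 0] with x hx
  rw [Real.norm_of_nonneg (binetFunction_nonneg hx), Real.norm_of_nonneg (by positivity)]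
  exact (binetFunction_le hx).trans_eq (by field)

end Binet

theorem log_one_add_isBigO : (fun w : ℝ => Real.log (1 + w)) =O[𝓝 0] fun w => w := by
  have hderiv : HasDerivAt (fun w : ℝ => Real.log (1 + w)) (1 / (1 + 0)) 0 :=
    ((hasDerivAt_id (0 : ℝ)).const_add 1).log (by simp)
  simpa using hderiv.isBigO_sub

theorem log_one_add_sub_isBigO :
    (fun w : ℝ => Real.log (1 + w) - (w - w ^ 2 / 2)) =O[𝓝 0] fun w => w ^ 3 := by
  refine IsBigO.of_bound 2 ?_
  filter_upwards [Metric.ball_mem_nhds 0 (by norm_num : (0 : ℝ) < 1 / 2)] with w hw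
  rw [mem_ball_zero_iff, Real.norm_eq_abs] at hw
  have htaylor : |-w + w ^ 2 / 2 + Real.log (1 + w)| ≤ |w| ^ 3 / (1 - |w|) := by
    simpa [Finset.sum_range_succ, one_add_one_eq_two] using
      Real.abs_log_sub_add_sum_range_le (x := -w) (by rw [abs_neg]; linarith) 2
  calc ‖Real.log (1 + w) - (w - w ^ 2 / 2)‖
      = |-w + w ^ 2 / 2 + Real.log (1 + w)| := by rw [Real.norm_eq_abs]; ring_nf
    _ ≤ |w| ^ 3 / (1 - |w|) := htaylor
    _ ≤ |w| ^ 3 / (1 / 2) := by gcongr; linarith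
    _ = 2 * ‖w ^ 3‖ := by rw [norm_pow, Real.norm_eq_abs]; ring

theorem one_add_mul_log_one_add_sub_isBigO :
    (fun w : ℝ => (1 + w) * Real.log (1 + w) - w - w ^ 2 / 2) =O[𝓝 0] fun w => w ^ 3 := by
  have hone : (fun w : ℝ => 1 + w) =O[𝓝 0] fun _ => (1 : ℝ) :=
    (continuous_const.add continuous_id).continuousAt.isBigO_one ℝ
  have hrem : (fun w : ℝ => (1 + w) * (Real.log (1 + w) - (w - w ^ 2 / 2))) =O[𝓝 0]
      fun w => w ^ 3 := by
    simpa using hone.mul log_one_add_sub_isBigO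
  refine (hrem.sub ((isBigO_refl (fun w : ℝ => w ^ 3) _).const_mul_left (1 / 2))).congr_left
    fun w => ?_
  ring

theorem exp_sub_one_isBigO : (fun x : ℝ => Real.exp x - 1) =O[𝓝 0] fun x => x := by
  simpa using (Real.hasDerivAt_exp 0).isBigO_sub

section Shift

variable {α : Type*} {l : Filter α}

theorem inv_isBigO_inv_sqrt {y : α → ℝ} (hy : Tendsto y l atTop) :
    (fun i => (y i)⁻¹) =O[l] fun i => (√(y i))⁻¹ := by
  refine IsBigO.of_bound 1 ?_
  filter_upwards [hy.eventually_ge_atTop 1] with i hi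
  rw [one_mul, Real.norm_of_nonneg (by positivity), Real.norm_of_nonneg (by positivity)]
  gcongr
  exact Real.sqrt_le_iff.2 ⟨by positivity, le_self_pow₀ hi two_ne_zero⟩

theorem one_isLittleO_sqrt {y : α → ℝ} (hy : Tendsto y l atTop) :
    (fun _ => (1 : ℝ)) =o[l] fun i => √(y i) :=
  (isLittleO_const_left_of_ne one_ne_zero).2
    (tendsto_norm_atTop_atTop.comp (Real.tendsto_sqrt_atTop.comp hy))

variable {y δ : α → ℝ}

theorem isEquivalent_add_of_isBigO_sqrt (hy : Tendsto y l atTop)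
    (hδ : δ =O[l] fun i => √(y i)) : IsEquivalent l (fun i => y i + δ i) y := by
  refine IsEquivalent.refl.add_isLittleO (hδ.trans_isLittleO ?_)
  refine ((isBigO_refl (fun i => √(y i)) l).mul_isLittleO
    (one_isLittleO_sqrt hy)).congr' (by simp) ?_
  filter_upwards [hy.eventually_ge_atTop 0] with i hi
  exact Real.mul_self_sqrt hi

theorem div_isBigO_inv_sqrt (hδ : δ =O[l] fun i => √(y i)) :
    (fun i => δ i / y i) =O[l] fun i => (√(y i))⁻¹ := by
  refine (hδ.mul (isBigO_refl (fun i => (y i)⁻¹) l)).congr' (by simp [div_eq_mul_inv]) ?_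
  exact .of_forall fun i => by simp only [← div_eq_mul_inv, Real.sqrt_div_self', one_div]

theorem mul_div_pow_three_isBigO_inv_sqrt (hy : Tendsto y l atTop)
    (hδ : δ =O[l] fun i => √(y i)) :
    (fun i => y i * (δ i / y i) ^ 3) =O[l] fun i => (√(y i))⁻¹ := by
  refine ((isBigO_refl y l).mul ((div_isBigO_inv_sqrt hδ).pow 3)).congr' (by rfl) ?_
  filter_upwards [hy.eventually_gt_atTop 0] with i hi
  have hsq : √(y i) ^ 2 = y i := Real.sq_sqrt hi.le
  have hne : √(y i) ≠ 0 := (Real.sqrt_pos.2 hi).ne'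
  rw [← hsq, Real.sqrt_sq (Real.sqrt_nonneg _)]
  field

theorem log_Gamma_add_add_one_eq {y δ : ℝ} (hy : 0 < y) (hz : 0 < y + δ) :
    Real.log (Real.Gamma (y + δ + 1)) =
      (y + δ + 1 / 2) * Real.log y + (δ ^ 2 / (2 * y) - y) + Real.log (2 * Real.pi) / 2 +
        (y * ((1 + δ / y) * Real.log (1 + δ / y) - δ / y - (δ / y) ^ 2 / 2) +
          Real.log (1 + δ / y) / 2 + binetFunction (y + δ)) := by
  rw [log_Gamma_add_one_eq_add_binetFunction hz, log_one_add_div hy.ne' hz.ne']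
  field

theorem log_Gamma_add_sub_isBigO (hy : Tendsto y l atTop) (hδ : δ =O[l] fun i => √(y i)) :
    (fun i => Real.log (Real.Gamma (y i + δ i + 1)) -
        ((y i + δ i + 1 / 2) * Real.log (y i) + (δ i ^ 2 / (2 * y i) - y i) +
          Real.log (2 * Real.pi) / 2))
      =O[l] fun i => (√(y i))⁻¹ := by
  have hequiv := isEquivalent_add_of_isBigO_sqrt hy hδ
  have hz : Tendsto (fun i => y i + δ i) l atTop := hequiv.symm.tendsto_atTop hy
  have hw := div_isBigO_inv_sqrt hδ
  have hw0 : Tendsto (fun i => δ i / y i) l (𝓝 0) :=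
    hw.trans_tendsto (Real.tendsto_sqrt_atTop.comp hy).inv_tendsto_atTop
  have hcubic : (fun i => y i * ((1 + δ i / y i) * Real.log (1 + δ i / y i) - δ i / y i -
      (δ i / y i) ^ 2 / 2)) =O[l] fun i => (√(y i))⁻¹ :=
    ((isBigO_refl y l).mul (one_add_mul_log_one_add_sub_isBigO.comp_tendsto hw0)).trans
      (mul_div_pow_three_isBigO_inv_sqrt hy hδ)
  have hlog : (fun i => Real.log (1 + δ i / y i) / 2) =O[l] fun i => (√(y i))⁻¹ := by
    simpa [div_eq_inv_mul, Function.comp_def] using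
      ((log_one_add_isBigO.comp_tendsto hw0).trans hw).const_mul_left (1 / 2)
  have hbinet : (fun i => binetFunction (y i + δ i)) =O[l] fun i => (√(y i))⁻¹ :=
    (binetFunction_isBigO_inv.comp_tendsto hz).trans
      (hequiv.inv.isBigO.trans (inv_isBigO_inv_sqrt hy))
  refine ((hcubic.add hlog).add hbinet).congr' ?_ (by rfl)
  filter_upwards [hy.eventually_gt_atTop 0, hz.eventually_gt_atTop 0] with i hyi hzi
  rw [log_Gamma_add_add_one_eq hyi hzi]
  ring

end Shift

theorem Gamma_div_eq_exp_log_sub {x y p q : ℝ} (hx : 0 < x) (hy : 0 < y) :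
    Real.Gamma x / (√(2 * Real.pi) * y ^ p * Real.exp q) =
      Real.exp (Real.log (Real.Gamma x) - (p * Real.log y + q + Real.log (2 * Real.pi) / 2)) := by
  rw [Real.exp_sub, Real.exp_log (Real.Gamma_pos_of_pos hx), Real.exp_add, Real.exp_add,
    ← Real.log_sqrt (by positivity), Real.exp_log (by positivity), Real.rpow_def_of_pos hy,
    mul_comm p]
  ring

section Specialization

variable {α : Type*} {l : Filter α} {a : ℝ} {t c : α → ℝ}

theorem mul_sqrt_add_sq_div_sub_isBigO (b : ℝ) (ha : a ≠ 0) (ht : Tendsto t l atTop)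
    (hc : c =O[l] fun _ => (1 : ℝ)) :
    (fun i => (b * √(t i) + c i) ^ 2 / (2 * (a * t i)) - b ^ 2 / (2 * a))
      =O[l] fun i => (√(t i))⁻¹ := by
  have hlin : (fun i => b / a * (c i * (√(t i))⁻¹)) =O[l] fun i => (√(t i))⁻¹ := by
    simpa using (hc.mul (isBigO_refl (fun i => (√(t i))⁻¹) l)).const_mul_left (b / a)
  have hquad : (fun i => 1 / (2 * a) * (c i ^ 2 * (t i)⁻¹)) =O[l] fun i => (√(t i))⁻¹ := by
    simpa using ((hc.pow 2).mul (inv_isBigO_inv_sqrt ht)).const_mul_left (1 / (2 * a))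
  refine (hlin.add hquad).congr' ?_ (by rfl)
  filter_upwards [ht.eventually_gt_atTop 0] with i hi
  have hsq : t i = √(t i) ^ 2 := (Real.sq_sqrt hi.le).symm
  have hs : 0 < √(t i) := Real.sqrt_pos.2 hi
  generalize √(t i) = s at hsq hs ⊢
  rw [hsq]
  field

theorem mul_sqrt_add_isBigO_sqrt (b : ℝ) (ha : 0 < a) (ht : Tendsto t l atTop)
    (hc : c =O[l] fun _ => (1 : ℝ)) :
    (fun i => b * √(t i) + c i) =O[l] fun i => √(a * t i) := by
  have hsum : (fun i => b * √(t i) + c i) =O[l] fun i => √(t i) :=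
    ((isBigO_refl _ l).const_mul_left b).add (hc.trans (one_isLittleO_sqrt ht).isBigO)
  simpa only [Real.sqrt_mul ha.le] using hsum.const_mul_right (Real.sqrt_pos.2 ha).ne'

theorem log_Gamma_linear_add_sqrt_sub_isBigO (b : ℝ) (ha : 0 < a) (ht : Tendsto t l atTop)
    (hc : c =O[l] fun _ => (1 : ℝ)) :
    (fun i => Real.log (Real.Gamma (a * t i + b * √(t i) + c i + 1)) -
        ((a * t i + b * √(t i) + c i + 1 / 2) * Real.log (a * t i) +
          (b ^ 2 / (2 * a) - a * t i) + Real.log (2 * Real.pi) / 2))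
      =O[l] fun i => (√(t i))⁻¹ := by
  have hscale : (fun i => (√(a * t i))⁻¹) =O[l] fun i => (√(t i))⁻¹ := by
    simpa only [Real.sqrt_mul ha.le, mul_inv] using
      (isBigO_refl (fun i => (√(t i))⁻¹) l).const_mul_left (√a)⁻¹
  have hlog := (log_Gamma_add_sub_isBigO (ht.const_mul_atTop ha)
    (mul_sqrt_add_isBigO_sqrt b ha ht hc)).trans hscale
  refine (hlog.add (mul_sqrt_add_sq_div_sub_isBigO b ha.ne' ht hc)).congr_left fun i => ?_
  simp only [← add_assoc]
  ring

theorem stirling_shifted_general (b : ℝ) (ha : 0 < a) (ht : Tendsto t l atTop)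
    (hc : c =O[l] fun _ => (1 : ℝ)) :
    (fun i =>
        Real.Gamma (a * t i + b * √(t i) + c i + 1) /
          (√(2 * Real.pi) * (a * t i) ^ (a * t i + b * √(t i) + c i + 1 / 2) *
            Real.exp (b ^ 2 / (2 * a) - a * t i)) - 1)
      =O[l] fun i => t i ^ (-(1 / 2) : ℝ) := by
  have hlog := log_Gamma_linear_add_sqrt_sub_isBigO b ha ht hc
  have hlog0 := hlog.trans_tendsto (Real.tendsto_sqrt_atTop.comp ht).inv_tendsto_atTop
  have hy : Tendsto (fun i => a * t i) l atTop := ht.const_mul_atTop ha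
  have hz : Tendsto (fun i => a * t i + (b * √(t i) + c i)) l atTop :=
    (isEquivalent_add_of_isBigO_sqrt hy
      (mul_sqrt_add_isBigO_sqrt b ha ht hc)).symm.tendsto_atTop hy
  refine ((exp_sub_one_isBigO.comp_tendsto hlog0).trans hlog).congr' ?_ ?_
  · filter_upwards [hy.eventually_gt_atTop 0, hz.eventually_gt_atTop 0] with i hyi hzi
    rw [Function.comp_apply, Gamma_div_eq_exp_log_sub (by linarith) hyi]
  · filter_upwards [ht.eventually_ge_atTop 0] with i hi
    rw [Real.rpow_neg hi, Real.sqrt_eq_rpow]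

end Specialization

/-- Stirling-type asymptotic: for fixed reals `a > 0`, `b`, `c`,
`Γ(an + b√n + c + 1) = √(2π) (an)^{an+b√n+c+1/2} e^{b²/(2a)-an} (1 + O(n^{-1/2}))`
as `n → ∞`. -/
theorem stirling_shifted (a b c : ℝ) (ha : 0 < a) :
    (fun n : ℕ =>
        Real.Gamma (a * n + b * Real.sqrt n + c + 1) /
          (Real.sqrt (2 * Real.pi) *
            (a * n) ^ (a * n + b * Real.sqrt n + c + 1 / 2) *
            Real.exp (b ^ 2 / (2 * a) - a * n)) - 1)
      =O[atTop] fun n : ℕ => (n : ℝ) ^ (-(1 / 2) : ℝ) :=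
  stirling_shifted_general b ha tendsto_natCast_atTop_atTop (isBigO_const_const c one_ne_zero atTop)
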